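/- Let Z be a finite nonempty set of points of ℙ²(K) having the Uniform Position Property, and suppose there are integers 1 ≤ a ≤ b such that for every t ≥ 0, dim_K [S/I_Z]_t = dim_K [S]_t − dim_K [S]_{t−a} − dim_K [S]_{t−b} + dim_K [S]_{t−a−b} (where [S]_j = 0 for j < 0), i.e., Z has the Hilbert function of a complete intersection of type (a,b). Then Z is a complete intersection: I_Z is generated by a regular sequence consisting of a form of degree a and a form of degree b. -/

import Mathlib

/-!
The Hilbert function says that `I_Z` has no form of degree below `a`, that it has a nonzero form `F`
of degree `a`, and that `dim [I_Z]_b = dim S_{b-a} + 1`, so that there is a form `G ∈ [I_Z]_b` that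
is not a multiple of `F`. If `F` and `G` are coprime, then `(F, G)_t` has dimension
`dim S_{t-a} + dim S_{t-b} - dim S_{t-a-b} = dim [I_Z]_t` for all `t` (`IZcomp_eq_multiples_sup`), and
since `I_Z` is homogeneous, `I_Z = (F, G)` (`coneIdeal_eq_span`).

Coprimality is where uniform position enters. A common factor `D` of `F` and `G` divides every form
of `[I_Z]_a` (`dvd_of_mem_IZcomp`), and it is itself a form (`isHomogeneous_factors`), of degree `d`
with `1 ≤ d < a` because `F ∤ G`. In degree `ℓ < a` one has `h_Z(ℓ) = dim S_ℓ`, so by uniform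
position a subset of `Z` lying on `r ≥ 1` independent curves of degree `ℓ` has at most `dim S_ℓ - r`
points (`UPP.card_add_le`). This applies to the points of `Z` on `D = 0`, and to the remaining points
of `Z`, which lie on the curves residual to `D` in `[I_Z]_a`. Together the two parts have fewer than
`h_Z(a)` points, which is absurd (`UPP.not_common_factor`).
-/

open MvPolynomial Module

noncomputable section

variable {K : Type} [Field K]

/-- The degree-`ℓ` component of the homogeneous ideal of a finite set `Z` of
(affine representatives of) points of `ℙ²(K)`: homogeneous forms of degree `ℓ`
vanishing at every point of `Z`. -/
def IZcomp (Z : Finset (Fin 3 → K)) (ℓ : ℕ) :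
    Submodule K (MvPolynomial (Fin 3) K) :=
  homogeneousSubmodule (Fin 3) K ℓ ⊓
    ⨅ v ∈ Z, LinearMap.ker (aeval (R := K) (S₁ := K) v).toLinearMap

/-- `h_Z(ℓ)`: the number of conditions `Z` imposes in degree `ℓ`. -/
def hfun (Z : Finset (Fin 3 → K)) (ℓ : ℕ) : ℕ :=
  finrank K (homogeneousSubmodule (Fin 3) K ℓ) - finrank K (IZcomp Z ℓ)

/-- The Uniform Position Property. -/
def UPP (Z : Finset (Fin 3 → K)) : Prop :=
  ∀ ℓ : ℕ, ∀ Y ⊆ Z, hfun Y ℓ = min Y.card (hfun Z ℓ)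

/-- The full (saturated, homogeneous) ideal of the finite set of points `Z`:
polynomials vanishing on the affine cone over `Z`. -/
def coneIdeal (Z : Finset (Fin 3 → K)) : Ideal (MvPolynomial (Fin 3) K) :=
  ⨅ v ∈ Z, ⨅ c : K, RingHom.ker (aeval (R := K) (S₁ := K) (c • v)).toRingHom

/-- `dim_K [S]_j` for `j : ℤ`, zero in negative degrees. -/
def dimS (K : Type) [Field K] (j : ℤ) : ℤ :=
  if 0 ≤ j then (finrank K (homogeneousSubmodule (Fin 3) K j.toNat) : ℤ) else 0

/-! ### Factors of forms -/

/-- The substitution `X i ↦ X i * T`; the coefficient of `T ^ n` in its value at `p` is the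
degree-`n` homogeneous component of `p`. -/
def grading : MvPolynomial (Fin 3) K →ₐ[K] Polynomial (MvPolynomial (Fin 3) K) :=
  aeval fun i => Polynomial.C (X i) * Polynomial.X

lemma grading_of_isHomogeneous {p : MvPolynomial (Fin 3) K} {n : ℕ} (hp : p.IsHomogeneous n) :
    grading p = Polynomial.C p * Polynomial.X ^ n := by
  conv_lhs => rw [p.as_sum]
  conv_rhs => rw [p.as_sum]
  rw [map_sum, map_sum, Finset.sum_mul]
  refine Finset.sum_congr rfl fun d hd => ?_
  have hdeg : d.degree = n := by
    by_contra h
    exact (mem_support_iff.mp hd) (hp.coeff_eq_zero h)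
  have hprod : ∀ c : K, monomial d c = C c * d.prod fun i e => X i ^ e := fun c =>
    monomial_eq
  rw [grading, aeval_monomial, hprod, ← hdeg]
  simp only [mul_pow, Finsupp.prod, Finset.prod_mul_distrib, map_mul, map_prod, map_pow,
    Finset.prod_pow_eq_pow_sum, Finsupp.degree]
  rw [mul_assoc]
  rfl

lemma grading_eval_one (p : MvPolynomial (Fin 3) K) : (grading p).eval 1 = p := by
  have : ((Polynomial.evalRingHom (1 : MvPolynomial (Fin 3) K)).comp
      (grading (K := K)).toRingHom) = RingHom.id _ := by
    refine MvPolynomial.ringHom_ext (fun r => ?_) fun i => ?_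
    · simp [grading, Polynomial.algebraMap_apply]
    · simp [grading]
  exact congrArg (fun f => f p) this

lemma coeff_grading (p : MvPolynomial (Fin 3) K) (n : ℕ) :
    (grading p).coeff n = homogeneousComponent n p := by
  conv_lhs => rw [← sum_homogeneousComponent p]
  rw [map_sum, Polynomial.finsetSum_coeff]
  simp only [grading_of_isHomogeneous (homogeneousComponent_isHomogeneous _ p),
    Polynomial.coeff_C_mul_X_pow]
  rw [Finset.sum_ite_eq]
  split_ifs with h
  · rfl
  · rw [homogeneousComponent_eq_zero]
    simpa using h

lemma isHomogeneous_of_natDegree_le {p : MvPolynomial (Fin 3) K}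
    (h : (grading p).natDegree ≤ (grading p).natTrailingDegree) :
    p.IsHomogeneous (grading p).natDegree := by
  have hp : homogeneousComponent (grading p).natDegree p = p := by
    rw [← coeff_grading]
    conv_rhs => rw [← grading_eval_one p]
    rw [Polynomial.eval_eq_sum_range, Finset.sum_eq_single (grading p).natDegree]
    · simp
    · intro i hi hne
      rw [Polynomial.coeff_eq_zero_of_lt_natTrailingDegree, zero_mul]
      have := Finset.mem_range.mp hi
      omega
    · simp
  rw [← hp]
  conv => enter [2]; rw [hp]
  exact homogeneousComponent_isHomogeneous _ _

/-- The factors of a nonzero form are forms: the lowest and the highest degrees occurring in a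
product are the sums of those of the factors. -/
lemma isHomogeneous_factors {p q : MvPolynomial (Fin 3) K} {n : ℕ}
    (h : (p * q).IsHomogeneous n) (h0 : p * q ≠ 0) :
    ∃ d e : ℕ, p.IsHomogeneous d ∧ q.IsHomogeneous e ∧ d + e = n := by
  have inj : ∀ r : MvPolynomial (Fin 3) K, r ≠ 0 → grading r ≠ 0 := fun r hr h => hr (by
    rw [← grading_eval_one r, h, Polynomial.eval_zero])
  have hp := inj p (left_ne_zero_of_mul h0)
  have hq := inj q (right_ne_zero_of_mul h0)
  have hpq := grading_of_isHomogeneous h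
  rw [map_mul] at hpq
  have h1 := Polynomial.natDegree_mul hp hq
  have h2 := Polynomial.natTrailingDegree_mul hp hq
  rw [hpq, Polynomial.natDegree_C_mul_X_pow _ _ h0] at h1
  rw [hpq, Polynomial.C_mul_X_pow_eq_monomial, Polynomial.natTrailingDegree_monomial h0] at h2
  have h3 := Polynomial.natTrailingDegree_le_natDegree (grading p)
  have h4 := Polynomial.natTrailingDegree_le_natDegree (grading q)
  exact ⟨_, _, isHomogeneous_of_natDegree_le (by omega), isHomogeneous_of_natDegree_le (by omega),
    h1.symm⟩

lemma isUnit_of_isHomogeneous_zero {p : MvPolynomial (Fin 3) K} (h : p.IsHomogeneous 0)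
    (h0 : p ≠ 0) : IsUnit p := by
  have hC := (totalDegree_eq_zero_iff_eq_C (p := p)).mp (h.totalDegree h0)
  rw [hC]
  refine IsUnit.map C (isUnit_iff_ne_zero.mpr fun hc => h0 ?_)
  rw [hC, hc, C_0]

/-! ### Dimensions of graded pieces -/

instance finiteDimensional_homogeneousSubmodule (n : ℕ) :
    FiniteDimensional K (homogeneousSubmodule (Fin 3) K n) :=
  Module.Finite.iff_fg.mpr (homogeneousSubmodule_fg (Fin 3) K n)

lemma finrank_homogeneousSubmodule (n : ℕ) :
    finrank K (homogeneousSubmodule (Fin 3) K n) = (n + 2).choose 2 := by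
  have e : (homogeneousSubmodule (Fin 3) K n) ≃ₗ[K]
      ({d : Fin 3 →₀ ℕ | d.degree = n} →₀ K) := by
    rw [homogeneousSubmodule_eq_finsupp_supported]
    exact AddMonoidAlgebra.supportedEquivFinsupp _
  have hs : {d : Fin 3 →₀ ℕ | d.degree = n} =
      ↑(Finset.finsuppAntidiag (Finset.univ : Finset (Fin 3)) n) := by
    ext d
    simp [Finset.mem_finsuppAntidiag, Finsupp.degree_eq_sum]
  rw [e.finrank_eq, hs]
  rw [Module.finrank_finsupp_self]
  simp only [Finset.coe_sort_coe, Fintype.card_coe]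
  rw [Finset.card_finsuppAntidiag_nat_eq_choose]
  simp only [Finset.card_univ, Fintype.card_fin]
  rw [show 3 + n - 1 = n + 2 by omega, Nat.choose_symm_add]

/-- The degree-`t` component of the principal ideal generated by `F`. -/
def multiples (F : MvPolynomial (Fin 3) K) (t : ℕ) : Submodule K (MvPolynomial (Fin 3) K) :=
  homogeneousSubmodule (Fin 3) K t ⊓ (Ideal.span {F}).restrictScalars K

lemma mem_multiples {F p : MvPolynomial (Fin 3) K} {t : ℕ} :
    p ∈ multiples F t ↔ p.IsHomogeneous t ∧ F ∣ p := by
  simp [multiples, Ideal.mem_span_singleton]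

instance finiteDimensional_multiples (F : MvPolynomial (Fin 3) K) (t : ℕ) :
    FiniteDimensional K (multiples F t) :=
  Submodule.finiteDimensional_of_le (inf_le_left : _ ≤ homogeneousSubmodule (Fin 3) K t)

instance finiteDimensional_IZcomp (Z : Finset (Fin 3 → K)) (t : ℕ) :
    FiniteDimensional K (IZcomp Z t) :=
  Submodule.finiteDimensional_of_le (inf_le_left : _ ≤ homogeneousSubmodule (Fin 3) K t)

lemma finrank_map_mulLeft {F : MvPolynomial (Fin 3) K} (hF : F ≠ 0)
    (V : Submodule K (MvPolynomial (Fin 3) K)) :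
    finrank K (V.map (LinearMap.mulLeft K F)) = finrank K V :=
  (LinearEquiv.finrank_eq (Submodule.equivMapOfInjective (LinearMap.mulLeft K F)
    (mul_right_injective₀ hF) V)).symm

/-- A nonzero form `F` of degree `a` has `dim (F)_t = dim S_{t-a}`, as every quotient of a form by
`F` is a form. -/
lemma finrank_multiples {F : MvPolynomial (Fin 3) K} {a : ℕ} (hF : F.IsHomogeneous a)
    (h0 : F ≠ 0) (t : ℕ) : (finrank K (multiples F t) : ℤ) = dimS K ((t : ℤ) - a) := by
  unfold dimS
  split_ifs with h
  · have hM : multiples F t =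
        (homogeneousSubmodule (Fin 3) K (t - a)).map (LinearMap.mulLeft K F) := by
      ext p
      rw [mem_multiples, Submodule.mem_map]
      constructor
      · rintro ⟨hp, q, rfl⟩
        refine ⟨q, ?_, rfl⟩
        rcases eq_or_ne q 0 with rfl | hq
        · exact zero_mem _
        · obtain ⟨d, e, hd, he, hde⟩ := isHomogeneous_factors hp (mul_ne_zero h0 hq)
          rw [hd.inj_right hF h0] at hde
          rw [mem_homogeneousSubmodule]
          rwa [show t - a = e by omega]
      · rintro ⟨q, hq, rfl⟩
        refine ⟨?_, dvd_mul_right F q⟩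
        have h := hF.mul ((mem_homogeneousSubmodule _ _).mp hq)
        rwa [Nat.add_sub_cancel' (by omega : a ≤ t)] at h
    rw [hM, finrank_map_mulLeft h0]
    rw [show ((t : ℤ) - a).toNat = t - a by omega]
  · have hM : multiples F t = ⊥ := by
      rw [eq_bot_iff]
      rintro p hp
      obtain ⟨hp, q, rfl⟩ := mem_multiples.mp hp
      rw [Submodule.mem_bot]
      by_contra hq
      obtain ⟨d, e, hd, he, hde⟩ := isHomogeneous_factors hp hq
      rw [hd.inj_right hF h0] at hde
      omega
    rw [hM, finrank_bot, Nat.cast_zero]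

/-! ### The cone ideal and its components -/

lemma mem_IZcomp {Z : Finset (Fin 3 → K)} {t : ℕ} {p : MvPolynomial (Fin 3) K} :
    p ∈ IZcomp Z t ↔ p.IsHomogeneous t ∧ ∀ v ∈ Z, aeval v p = 0 := by
  simp [IZcomp]

/-- On the line through `v`, a polynomial restricts to `c ↦ ∑ p_n(v) c ^ n`, with `p_n` its
homogeneous components. -/
lemma aeval_smul_eq (p : MvPolynomial (Fin 3) K) (v : Fin 3 → K) (c : K) :
    aeval (c • v) p = (Polynomial.map (aeval v : MvPolynomial (Fin 3) K →ₐ[K] K).toRingHom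
      (grading p)).eval c := by
  have : (aeval (c • v) : MvPolynomial (Fin 3) K →ₐ[K] K).toRingHom =
      ((Polynomial.evalRingHom c).comp (Polynomial.mapRingHom
        (aeval v : MvPolynomial (Fin 3) K →ₐ[K] K).toRingHom)).comp
      (grading (K := K)).toRingHom := by
    refine MvPolynomial.ringHom_ext (fun r => ?_) fun i => ?_
    · simp [grading, Polynomial.algebraMap_apply]
    · simp [grading, mul_comm c]
  exact congrArg (fun f => f p) this

/-- Vanishing on the lines through the points of `Z` means that every homogeneous component
vanishes at the points of `Z`; this uses that `K` is infinite. -/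
lemma mem_coneIdeal [Infinite K] {Z : Finset (Fin 3 → K)} {p : MvPolynomial (Fin 3) K} :
    p ∈ coneIdeal Z ↔ ∀ n, homogeneousComponent n p ∈ IZcomp Z n := by
  have h : p ∈ coneIdeal Z ↔ ∀ v ∈ Z, ∀ c : K, aeval (c • v) p = 0 := by
    simp [coneIdeal, RingHom.mem_ker]
  rw [h]
  simp only [mem_IZcomp, homogeneousComponent_isHomogeneous, true_and]
  constructor
  · intro hp n v hv
    have hz : Polynomial.map (aeval v : MvPolynomial (Fin 3) K →ₐ[K] K).toRingHom
        (grading p) = 0 := Polynomial.funext fun c => by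
      rw [← aeval_smul_eq, hp v hv c, Polynomial.eval_zero]
    have := congrArg (fun f => Polynomial.coeff f n) hz
    simpa [Polynomial.coeff_map, coeff_grading] using this
  · intro hp v hv c
    have hz : Polynomial.map (aeval v : MvPolynomial (Fin 3) K →ₐ[K] K).toRingHom
        (grading p) = 0 := by
      ext n
      simpa [Polynomial.coeff_map, coeff_grading] using hp n v hv
    rw [aeval_smul_eq, hz, Polynomial.eval_zero]

/-! ### Consequences of uniform position -/

/-- Below the initial degree of `I_Z`, where `h_Z(d) = dim S_d`, each form of degree `d` vanishing
on a subset `Y` of `Z` forces `h_Y(d) < h_Z(d)`, so uniform position gives `h_Y(d) = |Y|`. -/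
lemma UPP.card_add_le {Z Y : Finset (Fin 3 → K)} (hU : UPP Z) (hY : Y ⊆ Z) {d r : ℕ}
    (hd : finrank K (IZcomp Z d) = 0) (hr : 1 ≤ r) (hrY : r ≤ finrank K (IZcomp Y d)) :
    Y.card + r ≤ (d + 2).choose 2 := by
  have h := hU d Y hY
  have hle : finrank K (IZcomp Y d) ≤ finrank K (homogeneousSubmodule (Fin 3) K d) :=
    Submodule.finrank_mono inf_le_left
  unfold hfun at h
  rw [hd] at h
  rw [finrank_homogeneousSubmodule] at h hle
  omega

/-- In the initial degree `d + e` of `I_Z`, the forms cannot all share a factor `D` of degree `d`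
with `d, e ≥ 1`. Otherwise `Z` splits into the points on `D = 0`, at most `dim S_d - 1` in number,
and the rest, which lie on the residual curves of degree `e` and are at most
`dim S_e - dim [I_Z]_{d+e}` in number. This is less than `h_Z(d+e) ≤ |Z|`, since
`dim S_{d+e} - dim S_d - dim S_e = d * e - 1`. -/
lemma UPP.not_common_factor {Z : Finset (Fin 3 → K)} (hU : UPP Z) {d e : ℕ} (hd : 1 ≤ d)
    (he : 1 ≤ e) (hlow : ∀ t < d + e, finrank K (IZcomp Z t) = 0)
    (hpos : 1 ≤ finrank K (IZcomp Z (d + e)))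
    {D : MvPolynomial (Fin 3) K} (hD : D.IsHomogeneous d) (hD0 : D ≠ 0)
    (hdvd : ∀ p ∈ IZcomp Z (d + e), D ∣ p) : False := by
  classical
  have h1 : 1 ≤ finrank K (IZcomp (Z.filter fun v => aeval v D = 0) d) := by
    rw [Nat.one_le_iff_ne_zero]
    intro h
    rw [Submodule.finrank_eq_zero] at h
    have hm : D ∈ IZcomp (Z.filter fun v => aeval v D = 0) d :=
      mem_IZcomp.mpr ⟨hD, fun v hv => (Finset.mem_filter.mp hv).2⟩
    rw [h] at hm
    exact hD0 ((Submodule.mem_bot K).mp hm)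
  have h2 : finrank K (IZcomp Z (d + e)) ≤
      finrank K (IZcomp (Z.filter fun v => ¬ aeval v D = 0) e) := by
    rw [← finrank_map_mulLeft hD0 (IZcomp (Z.filter fun v => ¬ aeval v D = 0) e)]
    refine Submodule.finrank_mono fun p hp => ?_
    obtain ⟨q, rfl⟩ := hdvd p hp
    obtain ⟨hh, hv⟩ := mem_IZcomp.mp hp
    refine Submodule.mem_map.mpr ⟨q, mem_IZcomp.mpr ⟨?_, fun v hvZ => ?_⟩, rfl⟩
    · rcases eq_or_ne q 0 with rfl | hq
      · exact isHomogeneous_zero _ _ _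
      · obtain ⟨d', e', hd', he', hde⟩ := isHomogeneous_factors hh (mul_ne_zero hD0 hq)
        rw [hd'.inj_right hD hD0] at hde
        convert he' using 1
        omega
    · obtain ⟨hvZ, hne⟩ := Finset.mem_filter.mp hvZ
      have := hv v hvZ
      rw [map_mul] at this
      exact (mul_eq_zero.mp this).resolve_left hne
  have c1 := hU.card_add_le (Finset.filter_subset _ _) (hlow d (by omega)) le_rfl h1
  have c2 := hU.card_add_le (Finset.filter_subset _ _) (hlow e (by omega)) hpos h2
  have c3 := Finset.card_filter_add_card_filter_not (s := Z) fun v => aeval v D = 0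
  have c4 := hU (d + e) Z subset_rfl
  unfold hfun at c4
  rw [finrank_homogeneousSubmodule] at c4
  -- `dim S_d + dim S_e = dim S_{d+e} + 1 - d * e`, without subtraction in `ℕ`.
  have key : (d + 2).choose 2 + (e + 2).choose 2 + d * e = (d + e + 2).choose 2 + 1 := by
    zify
    have h : ∀ n : ℕ, (2 * ((n + 2).choose 2 : ℕ) : ℤ) = (n + 2) * (n + 1) := by
      intro n
      have := Nat.add_one_mul_choose_eq (n + 1) 1
      simp only [Nat.choose_one_right] at this
      push_cast [← @Nat.cast_inj ℤ] at this
      linarith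
    have := h d
    have := h e
    have := h (d + e)
    push_cast at this
    linarith
  have : 1 ≤ d * e := Nat.mul_pos hd he
  omega

/-! ### Complete intersections -/

/-- If `F` and `G` are coprime then `(F)_t ∩ (G)_t = (F * G)_t`, so `(F, G)` has the Hilbert function
of a complete intersection, and `(F, G)_t ⊆ [I_Z]_t` is an equality by dimension. -/
lemma IZcomp_eq_multiples_sup {Z : Finset (Fin 3 → K)} {F G : MvPolynomial (Fin 3) K} {a b : ℕ}
    (hF : F ∈ IZcomp Z a) (hG : G ∈ IZcomp Z b) (hF0 : F ≠ 0) (hG0 : G ≠ 0)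
    (hrel : IsRelPrime F G) (t : ℕ)
    (ht : (finrank K (IZcomp Z t) : ℤ) =
      dimS K ((t : ℤ) - a) + dimS K ((t : ℤ) - b) - dimS K ((t : ℤ) - a - b)) :
    multiples F t ⊔ multiples G t = IZcomp Z t := by
  obtain ⟨hFh, hFv⟩ := mem_IZcomp.mp hF
  obtain ⟨hGh, hGv⟩ := mem_IZcomp.mp hG
  have hle : ∀ {P : MvPolynomial (Fin 3) K}, (∀ v ∈ Z, aeval v P = 0) →
      multiples P t ≤ IZcomp Z t := by
    intro P hP p hp
    obtain ⟨hp, q, rfl⟩ := mem_multiples.mp hp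
    exact mem_IZcomp.mpr ⟨hp, fun v hv => by rw [map_mul, hP v hv, zero_mul]⟩
  have hinf : multiples F t ⊓ multiples G t = multiples (F * G) t := by
    ext p
    simp only [Submodule.mem_inf, mem_multiples]
    exact ⟨fun h => ⟨h.1.1, hrel.mul_dvd h.1.2 h.2.2⟩, fun h =>
      ⟨⟨h.1, dvd_of_mul_right_dvd h.2⟩, h.1, dvd_of_mul_left_dvd h.2⟩⟩
  refine Submodule.eq_of_le_of_finrank_eq (sup_le (hle hFv) (hle hGv)) ?_
  have h := Submodule.finrank_sup_add_finrank_inf_eq (multiples F t) (multiples G t)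
  rw [hinf] at h
  have h1 := finrank_multiples hFh hF0 t
  have h2 := finrank_multiples hGh hG0 t
  have h3 := finrank_multiples (hFh.mul hGh) (mul_ne_zero hF0 hG0) t
  rw [show (t : ℤ) - (a + b : ℕ) = (t : ℤ) - a - b by push_cast; ring] at h3
  omega

/-- Once the components of `I_Z` are those of `(F, G)`, the ideals agree. -/
lemma coneIdeal_eq_span [Infinite K] {Z : Finset (Fin 3 → K)} {F G : MvPolynomial (Fin 3) K}
    {a b : ℕ} (hF : F ∈ IZcomp Z a) (hG : G ∈ IZcomp Z b)
    (h : ∀ t, IZcomp Z t ≤ multiples F t ⊔ multiples G t) :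
    coneIdeal Z = Ideal.span {F, G} := by
  refine le_antisymm (fun p hp => ?_) ?_
  · rw [← sum_homogeneousComponent p]
    refine Ideal.sum_mem _ fun n _ => ?_
    obtain ⟨x, hx, y, hy, hxy⟩ := Submodule.mem_sup.mp (h n (mem_coneIdeal.mp hp n))
    obtain ⟨q, rfl⟩ := (mem_multiples.mp hx).2
    obtain ⟨r, rfl⟩ := (mem_multiples.mp hy).2
    rw [Ideal.mem_span_pair]
    exact ⟨q, r, by rw [← hxy]; ring⟩
  · have hmem : ∀ {P : MvPolynomial (Fin 3) K} {c : ℕ}, P ∈ IZcomp Z c → P ∈ coneIdeal Z := by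
      intro P c hP
      refine mem_coneIdeal.mpr fun n => ?_
      rw [homogeneousComponent_of_mem (mem_IZcomp.mp hP).1]
      split_ifs with hn
      · rwa [hn]
      · exact zero_mem _
    rw [Ideal.span_le, Set.insert_subset_iff, Set.singleton_subset_iff]
    exact ⟨hmem hF, hmem hG⟩

lemma dimS_of_neg {j : ℤ} (hj : j < 0) : dimS K j = 0 := by
  rw [dimS, if_neg (by omega)]

lemma dimS_zero : dimS K 0 = 1 := by
  rw [dimS, if_pos le_rfl, finrank_homogeneousSubmodule]
  rfl

/-- In the lowest degree `a` of `I_Z` all forms are multiples of any common divisor of `F` and `G`: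
for `a < b` there is only `F` up to scalars, and for `a = b` the component is spanned by `F`
and `G`. -/
lemma dvd_of_mem_IZcomp {Z : Finset (Fin 3 → K)} {F G D : MvPolynomial (Fin 3) K} {a b : ℕ}
    (hF : F ∈ IZcomp Z a) (hF0 : F ≠ 0) (hG : G ∈ IZcomp Z b) (hFG : ¬ F ∣ G) (hab : a ≤ b)
    (hrank : (finrank K (IZcomp Z a) : ℤ) = 1 + dimS K ((a : ℤ) - b))
    (hDF : D ∣ F) (hDG : D ∣ G) {p : MvPolynomial (Fin 3) K} (hp : p ∈ IZcomp Z a) : D ∣ p := by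
  have hFh := (mem_IZcomp.mp hF).1
  have hGh := (mem_IZcomp.mp hG).1
  have hrF := finrank_multiples hFh hF0 a
  rw [sub_self, dimS_zero] at hrF
  have hleF : multiples F a ≤ IZcomp Z a := by
    intro p hp
    obtain ⟨hp, q, rfl⟩ := mem_multiples.mp hp
    exact mem_IZcomp.mpr ⟨hp, fun v hv => by rw [map_mul, (mem_IZcomp.mp hF).2 v hv, zero_mul]⟩
  rcases hab.lt_or_eq with hlt | rfl
  · rw [dimS_of_neg (by omega)] at hrank
    have heq := Submodule.eq_of_le_of_finrank_eq hleF (by omega)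
    rw [← heq] at hp
    exact hDF.trans (mem_multiples.mp hp).2
  · rw [sub_self, dimS_zero] at hrank
    have hnot : G ∉ multiples F a := fun h => hFG (mem_multiples.mp h).2
    have hle : multiples F a ⊔ K ∙ G ≤ IZcomp Z a :=
      sup_le hleF ((Submodule.span_singleton_le_iff_mem _ _).mpr hG)
    have hlt : multiples F a < multiples F a ⊔ K ∙ G :=
      lt_of_le_of_ne le_sup_left fun h =>
        hnot (h ▸ Submodule.mem_sup_right (Submodule.mem_span_singleton_self G))
    have hfd : FiniteDimensional K ↥(multiples F a ⊔ K ∙ G) := Submodule.finiteDimensional_of_le hle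
    have h1 := Submodule.finrank_lt_finrank_of_lt hlt
    have h2 := Submodule.finrank_mono hle
    have heq := Submodule.eq_of_le_of_finrank_eq hle (by omega)
    rw [← heq] at hp
    obtain ⟨x, hx, y, hy, rfl⟩ := Submodule.mem_sup.mp hp
    obtain ⟨c, rfl⟩ := Submodule.mem_span_singleton.mp hy
    exact dvd_add (hDF.trans (mem_multiples.mp hx).2) (hDG.trans (Dvd.intro_left (C c) (by
      rw [MvPolynomial.smul_eq_C_mul])))

/-- A finite set of points of `ℙ²(K)` with the UPP whose Hilbert function is that of
a complete intersection of type `(a,b)` is a complete intersection: its ideal is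
generated by a regular sequence consisting of a form of degree `a` and a form of
degree `b`. -/
theorem stmt_2 {K : Type} [Field K] [IsAlgClosed K] [CharZero K]
    (Z : Finset (Fin 3 → K)) (hZne : Z.Nonempty)
    (hZ0 : ∀ v ∈ Z, v ≠ 0)
    (hZdist : ∀ v ∈ Z, ∀ w ∈ Z, v ≠ w → ∀ c : K, w ≠ c • v)
    (hUPP : UPP Z)
    (a b : ℕ) (ha : 1 ≤ a) (hab : a ≤ b)
    (hHF : ∀ t : ℕ,
      (finrank K (homogeneousSubmodule (Fin 3) K t) : ℤ) - (finrank K (IZcomp Z t) : ℤ) =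
        dimS K (t : ℤ) - dimS K ((t : ℤ) - a) - dimS K ((t : ℤ) - b)
          + dimS K ((t : ℤ) - a - b)) :
    ∃ F G : MvPolynomial (Fin 3) K,
      F.IsHomogeneous a ∧ G.IsHomogeneous b ∧
      F ≠ 0 ∧ (∀ H : MvPolynomial (Fin 3) K, G * H ∈ Ideal.span {F} → H ∈ Ideal.span {F}) ∧
      coneIdeal Z = Ideal.span {F, G} := by
  have hrank : ∀ t : ℕ, (finrank K (IZcomp Z t) : ℤ) =
      dimS K ((t : ℤ) - a) + dimS K ((t : ℤ) - b) - dimS K ((t : ℤ) - a - b) := by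
    intro t
    have h := hHF t
    have : dimS K (t : ℤ) = finrank K (homogeneousSubmodule (Fin 3) K t) := by
      simp [dimS]
    linarith
  have hlow : ∀ t < a, finrank K (IZcomp Z t) = 0 := by
    intro t ht
    have h := hrank t
    rw [dimS_of_neg (by omega), dimS_of_neg (by omega), dimS_of_neg (by omega)] at h
    omega
  have hranka : (finrank K (IZcomp Z a) : ℤ) = 1 + dimS K ((a : ℤ) - b) := by
    rw [hrank a, sub_self, dimS_zero, dimS_of_neg (by omega : (0 : ℤ) - b < 0), sub_zero]
  have hnn : ∀ j : ℤ, 0 ≤ dimS K j := fun j => by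
    unfold dimS
    split_ifs <;> omega
  have hposa : 1 ≤ finrank K (IZcomp Z a) := by
    have := hnn ((a : ℤ) - b)
    omega
  obtain ⟨F, hF, hF0⟩ := (IZcomp Z a).ne_bot_iff.mp fun h => by
    rw [h, finrank_bot] at hposa
    omega
  have hFh := (mem_IZcomp.mp hF).1
  -- `dim [I_Z]_b = dim S_{b-a} + 1` exceeds the dimension of `F · S_{b-a}` by one.
  obtain ⟨G, hG, hGF⟩ : ∃ G ∈ IZcomp Z b, G ∉ multiples F b := by
    by_contra! h
    have h1 := Submodule.finrank_mono (show IZcomp Z b ≤ multiples F b from h)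
    have h2 := finrank_multiples hFh hF0 b
    have h3 := hrank b
    rw [sub_self, dimS_zero, dimS_of_neg (by omega : (b : ℤ) - a - b < 0)] at h3
    omega
  have hGh := (mem_IZcomp.mp hG).1
  have hFG : ¬ F ∣ G := fun h => hGF (mem_multiples.mpr ⟨hGh, h⟩)
  have hG0 : G ≠ 0 := fun h => hFG (h ▸ dvd_zero F)
  have hrel : IsRelPrime F G := by
    rintro D ⟨E, rfl⟩ hDG
    by_contra hD
    have hD0 := left_ne_zero_of_mul hF0
    obtain ⟨d, e, hd, he, rfl⟩ := isHomogeneous_factors hFh hF0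
    refine hUPP.not_common_factor (d := d) (e := e) ?_ ?_ hlow hposa hd hD0 fun p hp =>
      dvd_of_mem_IZcomp hF hF0 hG hFG hab hranka (dvd_mul_right D E) hDG hp
    · rw [Nat.one_le_iff_ne_zero]
      rintro rfl
      exact hD (isUnit_of_isHomogeneous_zero hd hD0)
    · rw [Nat.one_le_iff_ne_zero]
      rintro rfl
      exact hFG ((isUnit_of_isHomogeneous_zero he (right_ne_zero_of_mul hF0)).mul_right_dvd.mpr hDG)
  refine ⟨F, G, hFh, hGh, hF0, fun H hH => ?_, ?_⟩
  · rw [Ideal.mem_span_singleton] at hH ⊢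
    exact hrel.dvd_of_dvd_mul_left hH
  · exact coneIdeal_eq_span hF hG fun t =>
      (IZcomp_eq_multiples_sup hF hG hF0 hG0 hrel t (hrank t)).ge
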